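/- Second fundamental theorem of FC for the general fractional derivative of Riemann–Liouville type: let (κ, k) ∈ L₁ and f ∈ C¹_{-1,(k)}(0,∞). Then for all t > 0, (κ * D_{(k)} f)(t) = f(t) − (k * f)(0) · κ(t), where (k * f)(0) = lim_{s→0+} (k * f)(s). -/

import Mathlib

open Real Filter MeasureTheory intervalIntegral

/-- The Laplace convolution `(f * g)(t) = ∫_0^t f(t-τ) g(τ) dτ`. -/
noncomputable def lconv (f g : ℝ → ℝ) : ℝ → ℝ :=
  fun t => ∫ τ in (0:ℝ)..t, f (t - τ) * g τ

/-- The space `C_{-1}(0,∞)`: functions representable as `t^p f₁(t)` with `p > -1`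
and `f₁` continuous on `[0,∞)`. -/
def CMinusOne (f : ℝ → ℝ) : Prop :=
  ∃ p : ℝ, p > -1 ∧ ∃ f₁ : ℝ → ℝ, ContinuousOn f₁ (Set.Ici 0) ∧
    ∀ t > (0:ℝ), f t = t ^ p * f₁ t


/-- The class `L₁` of Sonin kernel pairs: `κ, k ∈ C_{-1}(0,∞)` with `(κ * k)(t) = 1`
for all `t > 0`. -/
def SoninPair (κ k : ℝ → ℝ) : Prop :=
  CMinusOne κ ∧ CMinusOne k ∧ ∀ t > (0:ℝ), lconv κ k t = 1


/-!
Write `φ = (k * f)'`, so that `k * f = c + 1 * φ`. Convolving with `κ` and using `κ * k = 1`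
together with associativity gives `1 * f = c (1 * κ) + 1 * (κ * φ)`. Convolution with `1` is
integration from `0`, which is injective on functions continuous on `(0,∞)`, hence
`f = c κ + κ * φ`.

All of this takes place among the functions that are continuous on `(0,∞)` and integrable near `0`.
This class contains `C_{-1}` and is closed under convolution: cutting `∫_0^t` near both endpoints
separates the singularities of the two factors, so that each piece is continuous in `t`.
-/

open Set Topology
open scoped Convolution

lemma eqOn_of_indicator_eq {α M : Type*} [Zero M] {s : Set α} {f g : α → M}
    (h : s.indicator f = s.indicator g) : EqOn f g s :=
  eqOn_indicator.symm.trans (h ▸ eqOn_indicator)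

lemma lconv_comm (f g : ℝ → ℝ) : lconv f g = lconv g f := by
  funext t
  simpa [lconv, mul_comm] using
    (integral_comp_sub_left (a := 0) (b := t) (fun τ => f (t - τ) * g τ) t).symm

lemma lconv_const_left (c : ℝ) (f : ℝ → ℝ) (t : ℝ) :
    lconv (fun _ => c) f t = c * ∫ s in (0 : ℝ)..t, f s := by
  simp [lconv]

lemma lconv_one_left (f : ℝ → ℝ) : lconv (fun _ => 1) f = fun t => ∫ s in (0 : ℝ)..t, f s := by
  funext t
  rw [lconv_const_left, one_mul]

lemma indicator_lconv (f g : ℝ → ℝ) :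
    (Ioi 0).indicator (lconv f g) =
      (Ioi 0).indicator f ⋆[ContinuousLinearMap.mul ℝ ℝ, volume] (Ioi 0).indicator g := by
  rw [lconv_comm,
    ← posConvolution_eq_convolution_indicator f g (ContinuousLinearMap.mul ℝ ℝ) volume]
  unfold posConvolution lconv
  simp only [ContinuousLinearMap.mul_apply', mul_comm]

lemma lconv_congr {f f' g g' : ℝ → ℝ} (hf : EqOn f f' (Ioi 0)) (hg : EqOn g g' (Ioi 0)) :
    EqOn (lconv f g) (lconv f' g') (Ioi 0) :=
  eqOn_of_indicator_eq <| by
    rw [indicator_lconv, indicator_lconv, indicator_congr hf, indicator_congr hg]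

lemma eqOn_add_integral_deriv_of_tendsto {u : ℝ → ℝ} {a c : ℝ}
    (hu : ∀ t > a, DifferentiableAt ℝ u t) (hc : Tendsto u (𝓝[>] a) (𝓝 c))
    (hu' : ∀ t > a, IntervalIntegrable (deriv u) volume a t) :
    EqOn u (fun t => c + ∫ s in a..t, deriv u s) (Ioi a) := fun t ht => by
  have ftc : ∫ s in a..t, deriv u s = u t - c :=
    integral_eq_sub_of_hasDerivAt_of_tendsto ht (fun s hs => (hu s hs.1).hasDerivAt) (hu' t ht) hc
      ((hu t ht).continuousAt.tendsto.mono_left nhdsWithin_le_nhds)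
  simp only [ftc, add_sub_cancel]

lemma intervalIntegrable_lconv {f g : ℝ → ℝ} {t : ℝ} (ht : 0 ≤ t)
    (hf : IntervalIntegrable f volume 0 t) (hg : IntervalIntegrable g volume 0 t) :
    IntervalIntegrable (lconv f g) volume 0 t := by
  have integrableOn_truncation {u : ℝ → ℝ} (hu : IntervalIntegrable u volume 0 t) :
      IntegrableOn ((Iic t).indicator u) (Ioi 0) := by
    rw [IntegrableOn, integrable_indicator_iff measurableSet_Iic, IntegrableOn,
      Measure.restrict_restrict measurableSet_Iic, inter_comm, Ioi_inter_Iic]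
    exact (intervalIntegrable_iff_integrableOn_Ioc_of_le ht).1 hu
  rw [intervalIntegrable_iff_integrableOn_Ioc_of_le ht]
  refine (integrable_posConvolution (integrableOn_truncation hg) (integrableOn_truncation hf)
    (ContinuousLinearMap.mul ℝ ℝ)).integrableOn.congr_fun (fun s hs => ?_) measurableSet_Ioc
  rw [posConvolution, indicator_of_mem (show s ∈ Ioi 0 from hs.1)]
  refine integral_congr fun τ hτ => ?_
  rw [uIcc_of_le hs.1.le] at hτ
  have hτt : τ ∈ Iic t := hτ.2.trans hs.2
  have hsτt : s - τ ∈ Iic t := (sub_le_self s hτ.1).trans hs.2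
  simp only [ContinuousLinearMap.mul_apply', indicator_of_mem hτt, indicator_of_mem hsτt, mul_comm]

lemma continuousAt_integral_comp_sub_mul {f g : ℝ → ℝ} {a t₀ : ℝ} (ha : 0 ≤ a) (hat : a < t₀)
    (hf : ContinuousOn f (Ioi 0)) (hg : IntervalIntegrable g volume 0 a) :
    ContinuousAt (fun t => ∫ τ in (0 : ℝ)..a, f (t - τ) * g τ) t₀ := by
  have hsub : Icc ((t₀ - a) / 2) (t₀ + 1) ⊆ Ioi 0 := fun x hx => by
    rw [mem_Ioi]; linarith [hx.1]
  have hnhds : Icc ((t₀ + a) / 2) (t₀ + 1) ∈ 𝓝 t₀ := Icc_mem_nhds (by linarith) (by linarith)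
  have hmaps {t : ℝ} (ht : t ∈ Icc ((t₀ + a) / 2) (t₀ + 1)) :
      MapsTo (fun τ => t - τ) (uIcc 0 a) (Icc ((t₀ - a) / 2) (t₀ + 1)) := fun τ hτ => by
    rw [uIcc_of_le ha] at hτ
    constructor <;> linarith [ht.1, ht.2, hτ.1, hτ.2]
  obtain ⟨C, hC⟩ := isCompact_Icc.exists_bound_of_continuousOn (hf.mono hsub)
  refine continuousAt_of_dominated_interval (bound := fun τ => C * ‖g τ‖) ?_ ?_
    (hg.norm.const_mul C) ?_
  · filter_upwards [hnhds] with t ht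
    have hft : ContinuousOn (fun τ => f (t - τ)) (uIcc 0 a) :=
      (hf.mono hsub).comp (by fun_prop) (hmaps ht)
    exact (hg.continuousOn_mul hft).aestronglyMeasurable_restrict_uIoc
  · filter_upwards [hnhds] with t ht
    refine Eventually.of_forall fun τ hτ => ?_
    rw [norm_mul]
    gcongr
    exact hC _ (hmaps ht (uIoc_subset_uIcc hτ))
  · refine Eventually.of_forall fun τ hτ => ?_
    have hpos : 0 < t₀ - τ := hsub (hmaps (mem_of_mem_nhds hnhds) (uIoc_subset_uIcc hτ))
    have hfτ : ContinuousAt f (t₀ - τ) := hf.continuousAt (Ioi_mem_nhds hpos)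
    exact (hfτ.comp (f := fun t => t - τ) (by fun_prop)).mul continuousAt_const

lemma continuousAt_integral_comp_sub_mul_of_continuousOn {f g : ℝ → ℝ} {a t₀ : ℝ} (ha : 0 < a)
    (hat : 2 * a < t₀) (hf : ContinuousOn f (Ioi 0)) (hg : ContinuousOn g (Ioi 0)) :
    ContinuousAt (fun t => ∫ τ in a..t - a, f (t - τ) * g τ) t₀ := by
  -- Clamping the arguments to `[a, ∞)` makes the integrand jointly continuous on the whole plane.
  have continuous_comp_max {u : ℝ → ℝ} (hu : ContinuousOn u (Ioi 0)) :
      Continuous fun x => u (max a x) :=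
    hu.comp_continuous (by fun_prop) fun x => ha.trans_le (le_max_left a x)
  have hF := continuous_comp_max hf
  have hG := continuous_comp_max hg
  have hcont : Continuous fun t => ∫ τ in a..t - a, f (max a (t - τ)) * g (max a τ) :=
    continuous_parametric_intervalIntegral_of_continuous
      ((hF.comp (by fun_prop)).mul (hG.comp (by fun_prop))) (by fun_prop)
  refine hcont.continuousAt.congr ?_
  filter_upwards [Ioi_mem_nhds hat] with t ht
  refine integral_congr fun τ hτ => ?_
  rw [uIcc_of_le (by linarith [mem_Ioi.1 ht])] at hτ
  simp only [max_eq_right hτ.1, max_eq_right (show a ≤ t - τ by linarith [hτ.2])]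

/-- Weakly singular functions on `(0,∞)`: continuous there and integrable up to `0`. This is the
natural enlargement of `C_{-1}(0,∞)`; the values on `(-∞,0]` are arbitrary. -/
structure WeaklySingular (f : ℝ → ℝ) : Prop where
  continuousOn : ContinuousOn f (Ioi 0)
  intervalIntegrable : ∀ ⦃t⦄, 0 < t → IntervalIntegrable f volume 0 t

lemma CMinusOne.weaklySingular {f : ℝ → ℝ} (hf : CMinusOne f) : WeaklySingular f := by
  obtain ⟨p, hp, f₁, hf₁, hff₁⟩ := hf
  refine ⟨?_, fun t ht => ?_⟩
  · have hpow : ContinuousOn (fun t : ℝ => t ^ p) (Ioi 0) :=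
      continuousOn_id.rpow_const fun t ht => Or.inl (ne_of_gt ht)
    exact (hpow.mul (hf₁.mono Ioi_subset_Ici_self)).congr hff₁
  · have hsub : uIcc 0 t ⊆ Ici 0 := by
      rw [uIcc_of_le ht.le]
      exact Icc_subset_Ici_self
    refine ((intervalIntegrable_rpow' hp).mul_continuousOn (hf₁.mono hsub)).congr fun s hs => ?_
    rw [uIoc_of_le ht.le] at hs
    exact (hff₁ s hs.1).symm

lemma weaklySingular_const (c : ℝ) : WeaklySingular fun _ => c :=
  ⟨continuousOn_const, fun _ _ => intervalIntegrable_const⟩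

namespace WeaklySingular

variable {f g h : ℝ → ℝ}

protected lemma add (hf : WeaklySingular f) (hg : WeaklySingular g) :
    WeaklySingular fun t => f t + g t :=
  ⟨hf.continuousOn.add hg.continuousOn,
    fun _ ht => (hf.intervalIntegrable ht).add (hg.intervalIntegrable ht)⟩

protected lemma const_mul (hf : WeaklySingular f) (c : ℝ) : WeaklySingular fun t => c * f t :=
  ⟨continuousOn_const.mul hf.continuousOn, fun _ ht => (hf.intervalIntegrable ht).const_mul c⟩

protected lemma norm (hf : WeaklySingular f) : WeaklySingular fun t => ‖f t‖ :=
  ⟨hf.continuousOn.norm, fun _ ht => (hf.intervalIntegrable ht).norm⟩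

lemma aestronglyMeasurable_indicator (hf : WeaklySingular f) :
    AEStronglyMeasurable ((Ioi 0).indicator f) :=
  (aestronglyMeasurable_indicator_iff measurableSet_Ioi).2
    (hf.continuousOn.aestronglyMeasurable measurableSet_Ioi)

lemma hasDerivAt_integral (hf : WeaklySingular f) {t : ℝ} (ht : 0 < t) :
    HasDerivAt (fun u => ∫ s in (0 : ℝ)..u, f s) (f t) t :=
  integral_hasDerivAt_right (hf.intervalIntegrable ht)
    (hf.continuousOn.stronglyMeasurableAtFilter isOpen_Ioi t ht)
    (hf.continuousOn.continuousAt (Ioi_mem_nhds ht))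

lemma eqOn_of_integral_eq (hf : WeaklySingular f) (hg : WeaklySingular g)
    (hfg : ∀ t > 0, ∫ s in (0 : ℝ)..t, f s = ∫ s in (0 : ℝ)..t, g s) : EqOn f g (Ioi 0) :=
  fun _ ht => ((hf.hasDerivAt_integral ht).congr_of_eventuallyEq
    (eventually_of_mem (Ioi_mem_nhds ht) fun u hu => (hfg u hu).symm)).unique
    (hg.hasDerivAt_integral ht)

lemma intervalIntegrable_comp_sub_mul (hf : WeaklySingular f) (hg : WeaklySingular g) {t : ℝ}
    (ht : 0 < t) : IntervalIntegrable (fun τ => f (t - τ) * g τ) volume 0 t := by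
  have left_half {u v : ℝ → ℝ} (hu : WeaklySingular u) (hv : WeaklySingular v) :
      IntervalIntegrable (fun τ => u (t - τ) * v τ) volume 0 (t / 2) := by
    refine (hv.intervalIntegrable (half_pos ht)).continuousOn_mul
      (hu.continuousOn.comp (by fun_prop) fun τ hτ => ?_)
    rw [uIcc_of_le (half_pos ht).le] at hτ
    rw [mem_Ioi]
    linarith [hτ.2]
  refine (left_half hf hg).trans ?_
  simpa [mul_comm, sub_half] using ((left_half hg hf).comp_sub_left t).symm

lemma lconv_eq_integral_add_integral_add_integral (hf : WeaklySingular f)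
    (hg : WeaklySingular g) {a t : ℝ} (ha : 0 ≤ a) (hat : a ≤ t) (ht : 0 < t) :
    lconv f g t = (∫ τ in (0 : ℝ)..a, f (t - τ) * g τ) + (∫ τ in a..t - a, f (t - τ) * g τ) +
      ∫ τ in (0 : ℝ)..a, g (t - τ) * f τ := by
  have hint {b d : ℝ} (hb : b ∈ Icc 0 t) (hd : d ∈ Icc 0 t) :
      IntervalIntegrable (fun τ => f (t - τ) * g τ) volume b d :=
    (hf.intervalIntegrable_comp_sub_mul hg ht).mono_set
      (uIcc_subset_uIcc (Icc_subset_uIcc hb) (Icc_subset_uIcc hd))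
  have h0 : (0 : ℝ) ∈ Icc 0 t := ⟨le_rfl, ht.le⟩
  have h_a : a ∈ Icc 0 t := ⟨ha, hat⟩
  have h_ta : t - a ∈ Icc 0 t := ⟨sub_nonneg.2 hat, sub_le_self t ha⟩
  have reflect : ∫ τ in (0 : ℝ)..a, g (t - τ) * f τ = ∫ τ in t - a..t, f (t - τ) * g τ := by
    simpa [mul_comm] using
      integral_comp_sub_left (a := 0) (b := a) (fun τ => f (t - τ) * g τ) t
  rw [reflect, integral_add_adjacent_intervals (hint h0 h_a) (hint h_a h_ta),
    integral_add_adjacent_intervals (hint h0 h_ta) (hint h_ta ⟨ht.le, le_rfl⟩), lconv]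

protected lemma lconv (hf : WeaklySingular f) (hg : WeaklySingular g) :
    WeaklySingular (lconv f g) := by
  refine ⟨fun t₀ ht₀ => ContinuousAt.continuousWithinAt ?_, fun t ht =>
    intervalIntegrable_lconv ht.le (hf.intervalIntegrable ht) (hg.intervalIntegrable ht)⟩
  rw [mem_Ioi] at ht₀
  obtain ⟨a, ha, hat⟩ : ∃ a > 0, 2 * a < t₀ := ⟨t₀ / 3, by positivity, by linarith⟩
  have hat' : a < t₀ := by linarith
  have near_zero := continuousAt_integral_comp_sub_mul ha.le hat' hf.continuousOn
    (hg.intervalIntegrable ha)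
  have middle := continuousAt_integral_comp_sub_mul_of_continuousOn ha hat hf.continuousOn
    hg.continuousOn
  have near_end := continuousAt_integral_comp_sub_mul ha.le hat' hg.continuousOn
    (hf.intervalIntegrable ha)
  refine ((near_zero.add middle).add near_end).congr ?_
  filter_upwards [Ioi_mem_nhds hat'] with t (ht : a < t)
  exact (hf.lconv_eq_integral_add_integral_add_integral hg ha.le ht.le (ha.trans ht)).symm

lemma convolutionExistsAt_indicator (hf : WeaklySingular f) (hg : WeaklySingular g) (t : ℝ) :
    ConvolutionExistsAt ((Ioi 0).indicator f) ((Ioi 0).indicator g) t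
      (ContinuousLinearMap.mul ℝ ℝ) volume := by
  have integrand_eq : (fun τ => ContinuousLinearMap.mul ℝ ℝ ((Ioi 0).indicator f τ)
      ((Ioi 0).indicator g (t - τ))) = (Ioo 0 t).indicator fun τ => g (t - τ) * f τ := by
    funext τ
    by_cases h0 : 0 < τ <;> by_cases h1 : τ < t <;> simp [h0, h1, mul_comm]
  rw [ConvolutionExistsAt, integrand_eq, integrable_indicator_iff measurableSet_Ioo]
  rcases le_or_gt t 0 with ht | ht
  · simp [Ioo_eq_empty (not_lt.2 ht)]
  · exact (intervalIntegrable_iff_integrableOn_Ioo_of_le ht.le).1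
      (hg.intervalIntegrable_comp_sub_mul hf ht)

lemma lconv_assoc (hf : WeaklySingular f) (hg : WeaklySingular g) (hh : WeaklySingular h) :
    EqOn (lconv (lconv f g) h) (lconv f (lconv g h)) (Ioi 0) := by
  refine eqOn_of_indicator_eq (funext fun t => ?_)
  simp only [indicator_lconv]
  have norm_indicator (u : ℝ → ℝ) :
      (fun x => ‖(Ioi 0).indicator u x‖) = (Ioi 0).indicator fun x => ‖u x‖ :=
    funext fun x => norm_indicator_eq_indicator_norm u x
  refine convolution_assoc _ _ _ _ (fun x y z => mul_assoc x y z)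
    hf.aestronglyMeasurable_indicator hg.aestronglyMeasurable_indicator
    hh.aestronglyMeasurable_indicator
    (Eventually.of_forall (hf.convolutionExistsAt_indicator hg)) ?_ ?_
  · simp only [norm_indicator]
    exact Eventually.of_forall (hg.norm.convolutionExistsAt_indicator hh.norm)
  · simp only [norm_indicator, ← indicator_lconv]
    exact hf.norm.convolutionExistsAt_indicator (hg.norm.lconv hh.norm) t

lemma lconv_add_right (hf : WeaklySingular f) (hg : WeaklySingular g) (hh : WeaklySingular h)
    {t : ℝ} (ht : 0 < t) :
    lconv f (fun s => g s + h s) t = lconv f g t + lconv f h t := by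
  simp only [lconv, mul_add]
  exact integral_add (hf.intervalIntegrable_comp_sub_mul hg ht)
    (hf.intervalIntegrable_comp_sub_mul hh ht)

protected lemma primitive (hf : WeaklySingular f) :
    WeaklySingular fun t => ∫ s in (0 : ℝ)..t, f s := by
  rw [← lconv_one_left]
  exact (weaklySingular_const 1).lconv hf

lemma lconv_primitive (hf : WeaklySingular f) (hg : WeaklySingular g) :
    EqOn (lconv f fun s => ∫ u in (0 : ℝ)..s, g u)
      (fun t => ∫ s in (0 : ℝ)..t, lconv f g s) (Ioi 0) := by
  have h1 := weaklySingular_const 1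
  rw [← lconv_one_left, ← lconv_one_left]
  refine (hf.lconv_assoc h1 hg).symm.trans ?_
  rw [lconv_comm f]
  exact h1.lconv_assoc hf hg

end WeaklySingular

theorem second_fundamental_theorem_RL_general (κ k f : ℝ → ℝ) (c : ℝ) (hκ : WeaklySingular κ)
    (hk : WeaklySingular k) (hκk : ∀ t > (0 : ℝ), lconv κ k t = 1) (hf : WeaklySingular f)
    (hdiff : ∀ t > (0 : ℝ), DifferentiableAt ℝ (lconv k f) t)
    (hlim : Tendsto (lconv k f) (𝓝[>] 0) (𝓝 c)) (hder : WeaklySingular (deriv (lconv k f))) :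
    ∀ t > (0 : ℝ), lconv κ (deriv (lconv k f)) t = f t - c * κ t := by
  set φ := deriv (lconv k f)
  have lconv_eq : EqOn (lconv k f) (fun t => c + ∫ s in (0 : ℝ)..t, φ s) (Ioi 0) :=
    eqOn_add_integral_deriv_of_tendsto hdiff hlim hder.intervalIntegrable
  have integral_eq (t : ℝ) (ht : 0 < t) :
      ∫ s in (0 : ℝ)..t, f s = ∫ s in (0 : ℝ)..t, (c * κ s + lconv κ φ s) :=
    calc ∫ s in (0 : ℝ)..t, f s
      _ = lconv (fun _ => 1) f t := by rw [lconv_one_left]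
      _ = lconv (lconv κ k) f t := (lconv_congr hκk (eqOn_refl f _) ht).symm
      _ = lconv κ (lconv k f) t := hκ.lconv_assoc hk hf ht
      _ = lconv κ (fun s => c + ∫ u in (0 : ℝ)..s, φ u) t :=
        lconv_congr (eqOn_refl κ _) lconv_eq ht
      _ = lconv κ (fun _ => c) t + lconv κ (fun s => ∫ u in (0 : ℝ)..s, φ u) t :=
        hκ.lconv_add_right (weaklySingular_const c) hder.primitive ht
      _ = (c * ∫ s in (0 : ℝ)..t, κ s) + ∫ s in (0 : ℝ)..t, lconv κ φ s := by
        rw [lconv_comm, lconv_const_left, hκ.lconv_primitive hder ht]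
      _ = ∫ s in (0 : ℝ)..t, (c * κ s + lconv κ φ s) := by
        rw [← intervalIntegral.integral_const_mul,
          integral_add ((hκ.const_mul c).intervalIntegrable ht)
            ((hκ.lconv hder).intervalIntegrable ht)]
  intro t ht
  have f_eq : f t = c * κ t + lconv κ φ t :=
    hf.eqOn_of_integral_eq ((hκ.const_mul c).add (hκ.lconv hder)) integral_eq ht
  rw [f_eq, add_sub_cancel_left]

/-- Second fundamental theorem of FC for the GFD of Riemann–Liouville type:
for `(κ, k) ∈ L₁` and `f ∈ C¹_{-1,(k)}(0,∞)` (i.e. `f ∈ C_{-1}(0,∞)`, `k * f` is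
differentiable on `(0,∞)` with a finite limit `c = (k * f)(0)` at `0+` and
`d/dt (k * f) ∈ C_{-1}(0,∞)`), one has
`(κ * D_{(k)} f)(t) = f(t) − (k * f)(0) κ(t)` for all `t > 0`. -/
theorem second_fundamental_theorem_RL (κ k f : ℝ → ℝ) (c : ℝ) (hκk : SoninPair κ k)
    (hf : CMinusOne f) (hdiff : ∀ t > (0:ℝ), DifferentiableAt ℝ (lconv k f) t)
    (hlim : Tendsto (lconv k f) (nhdsWithin 0 (Set.Ioi 0)) (nhds c))
    (hder : CMinusOne (deriv (lconv k f))) :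
    ∀ t > (0:ℝ), lconv κ (deriv (lconv k f)) t = f t - c * κ t :=
  second_fundamental_theorem_RL_general κ k f c hκk.1.weaklySingular hκk.2.1.weaklySingular
    hκk.2.2 hf.weaklySingular hdiff hlim hder.weaklySingular
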